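/- Let n, s, q be integers with 1 ≤ q ≤ s ≤ n, let M ≥ 0, and let a, a' ∈ ℝ^n agree at every coordinate except possibly one coordinate i₀, with |a_{i₀} − a'_{i₀}| ≤ M. Then | (1/q) ∑_{j=1}^{n} γ_j a_{(j)} − (1/q) ∑_{j=1}^{n} γ_j a'_{(j)} | ≤ (s/q)·(M/n). (This is the bounded-differences property of the ordered empirical loss used to apply McDiarmid's inequality in the proof of Theorem 3.) -/

import Mathlib

/-- `sortDesc a` is the vector `a : Fin n → ℝ` sorted in nonincreasing order (with multiplicity). -/
noncomputable def sortDesc {n : ℕ} (a : Fin n → ℝ) : Fin n → ℝ :=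
  fun j => a (Tuple.sort (fun i => -a i) j)

/-- `gammaR n s q j` is the coefficient `γ_{j+1} = (∑_{l=0}^{q-1} C(j, l)·C(n-1-j, s-l-1)) / C(n,s)`
(with the `Fin n` index `j` corresponding to the paper's index `j+1 ∈ {1,…,n}`). -/
noncomputable def gammaR (n s q : ℕ) (j : Fin n) : ℝ :=
  ((∑ l ∈ Finset.range q,
      Nat.choose j.val l * Nat.choose (n - 1 - j.val) (s - l - 1) : ℕ) : ℝ)
    / (Nat.choose n s : ℝ)

theorem sortDesc_anti {n : ℕ} (a : Fin n → ℝ) {i j : Fin n} (hij : i ≤ j) :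
    sortDesc a j ≤ sortDesc a i := by
  have := Tuple.monotone_sort (fun i => -a i) hij
  simp only [Function.comp] at this
  unfold sortDesc
  linarith

theorem sortDesc_mono {n : ℕ} (a b : Fin n → ℝ) (hab : ∀ i, a i ≤ b i) (j : Fin n) :
    sortDesc a j ≤ sortDesc b j := by
  classical
  set σ := Tuple.sort (fun i => -a i) with hσ
  set τ := Tuple.sort (fun i => -b i) with hτ
  have hne : ¬ Disjoint ((Finset.Iic j).map σ.toEmbedding) ((Finset.Ici j).map τ.toEmbedding) := by
    intro hd
    have h1 := Finset.card_union_of_disjoint hd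
    have h2 := Finset.card_le_univ
      ((Finset.Iic j).map σ.toEmbedding ∪ (Finset.Ici j).map τ.toEmbedding)
    rw [h1] at h2
    simp only [Finset.card_map, Fin.card_Iic, Fin.card_Ici, Fintype.card_fin] at h2
    have := j.2
    omega
  rw [Finset.not_disjoint_iff] at hne
  obtain ⟨k, hk1, hk2⟩ := hne
  simp only [Finset.mem_map, Finset.mem_Iic, Finset.mem_Ici, Equiv.coe_toEmbedding] at hk1 hk2
  obtain ⟨i, hi, rfl⟩ := hk1
  obtain ⟨i', hi', he⟩ := hk2
  calc sortDesc a j ≤ sortDesc a i := sortDesc_anti a hi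
    _ = a (σ i) := rfl
    _ ≤ b (σ i) := hab _
    _ = b (τ i') := by rw [he]
    _ = sortDesc b i' := rfl
    _ ≤ sortDesc b j := sortDesc_anti b hi'

theorem sortDesc_sum {n : ℕ} (a : Fin n → ℝ) : ∑ j, sortDesc a j = ∑ j, a j :=
  Equiv.sum_comp (Tuple.sort (fun i => -a i)) a

theorem gammaR_nonneg (n s q : ℕ) (j : Fin n) : 0 ≤ gammaR n s q j := by
  unfold gammaR; positivity

theorem gammaR_le (n s q : ℕ) (hq : 1 ≤ q) (hqs : q ≤ s) (hsn : s ≤ n) (j : Fin n) :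
    gammaR n s q j ≤ (s : ℝ) / n := by
  have hj := j.2
  have h1 : ∑ l ∈ Finset.range q, Nat.choose j.val l * Nat.choose (n - 1 - j.val) (s - l - 1)
      ≤ Nat.choose (n - 1) (s - 1) := by
    have hn : n - 1 = j.val + (n - 1 - j.val) := by omega
    conv_rhs => rw [hn]
    rw [Nat.add_choose_eq, Finset.Nat.sum_antidiagonal_eq_sum_range_succ
      (fun x y => Nat.choose j.val x * Nat.choose (n - 1 - j.val) y)]
    have : s - 1 + 1 = s := by omega
    rw [Nat.succ_eq_add_one, this]
    calc _ ≤ ∑ l ∈ Finset.range s,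
          Nat.choose j.val l * Nat.choose (n - 1 - j.val) (s - l - 1) :=
          Finset.sum_le_sum_of_subset (Finset.range_mono hqs)
      _ = _ := by
        refine Finset.sum_congr rfl fun l _ => ?_
        rw [Nat.sub_right_comm s l 1]
  have h2 : n * Nat.choose (n - 1) (s - 1) = Nat.choose n s * s := by
    have := Nat.add_one_mul_choose_eq (n - 1) (s - 1)
    rwa [show n - 1 + 1 = n by omega, show s - 1 + 1 = s by omega] at this
  have hc : 0 < Nat.choose n s := Nat.choose_pos hsn
  have hn0 : 0 < n := by omega
  unfold gammaR
  rw [div_le_div_iff₀ (by exact_mod_cast hc) (by exact_mod_cast hn0)]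
  have h3 := Nat.mul_le_mul_left n h1
  rw [h2] at h3
  have : (∑ l ∈ Finset.range q, Nat.choose j.val l * Nat.choose (n - 1 - j.val) (s - l - 1)) * n
      ≤ s * Nat.choose n s := by linarith
  exact_mod_cast this

theorem ordered_diff (n s q : ℕ) (hq : 1 ≤ q) (hqs : q ≤ s) (hsn : s ≤ n)
    (M : ℝ) (a b : Fin n → ℝ) (i₀ : Fin n)
    (h : ∀ i, i ≠ i₀ → a i = b i) (hle : a i₀ ≤ b i₀) (hi₀ : b i₀ - a i₀ ≤ M) :
    |∑ j : Fin n, gammaR n s q j * sortDesc b j - ∑ j : Fin n, gammaR n s q j * sortDesc a j|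
      ≤ (s : ℝ) * (M / n) := by
  have hab : ∀ i, a i ≤ b i := fun i => by
    by_cases hi : i = i₀
    · rw [hi]; exact hle
    · exact (h i hi).le
  have hm := sortDesc_mono a b hab
  rw [← Finset.sum_sub_distrib]
  simp only [← mul_sub]
  rw [abs_of_nonneg (Finset.sum_nonneg fun j _ =>
    mul_nonneg (gammaR_nonneg n s q j) (sub_nonneg.2 (hm j)))]
  calc _ ≤ ∑ j : Fin n, (s : ℝ) / n * (sortDesc b j - sortDesc a j) :=
        Finset.sum_le_sum fun j _ =>
          mul_le_mul_of_nonneg_right (gammaR_le n s q hq hqs hsn j) (sub_nonneg.2 (hm j))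
    _ = (s : ℝ) / n * (b i₀ - a i₀) := by
        rw [← Finset.mul_sum, Finset.sum_sub_distrib, sortDesc_sum, sortDesc_sum,
          ← Finset.sum_sub_distrib, Finset.sum_eq_single i₀]
        · intro i _ hi
          rw [h i hi, sub_self]
        · simp
    _ ≤ (s : ℝ) / n * M := mul_le_mul_of_nonneg_left hi₀ (by positivity)
    _ = _ := by ring

/-- bounded-differences property of the ordered empirical loss, used for
McDiarmid's inequality in the proof of Theorem 3. If `a, a' ∈ ℝⁿ` agree except possibly at one
coordinate `i₀`, where they differ by at most `M`, then the ordered `γ`-weighted averages differ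
by at most `(s/q)·(M/n)`. -/
theorem stmt_18 (n s q : ℕ) (hq : 1 ≤ q) (hqs : q ≤ s) (hsn : s ≤ n)
    (M : ℝ) (hM : 0 ≤ M) (a a' : Fin n → ℝ) (i₀ : Fin n)
    (h : ∀ i, i ≠ i₀ → a i = a' i) (hi₀ : |a i₀ - a' i₀| ≤ M) :
    |(1 / (q : ℝ)) * ∑ j : Fin n, gammaR n s q j * sortDesc a j
        - (1 / (q : ℝ)) * ∑ j : Fin n, gammaR n s q j * sortDesc a' j|
      ≤ ((s : ℝ) / (q : ℝ)) * (M / (n : ℝ)) := by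
  have key : |∑ j : Fin n, gammaR n s q j * sortDesc a j
      - ∑ j : Fin n, gammaR n s q j * sortDesc a' j| ≤ (s : ℝ) * (M / n) := by
    rcases le_total (a i₀) (a' i₀) with hl | hl
    · rw [abs_sub_comm]
      refine ordered_diff n s q hq hqs hsn M a a' i₀ h hl ?_
      have := (abs_le.1 hi₀).1
      linarith
    · exact ordered_diff n s q hq hqs hsn M a' a i₀ (fun i hi => (h i hi).symm) hl
        (abs_le.1 hi₀).2
  rw [← mul_sub, abs_mul, abs_of_nonneg (by positivity : (0 : ℝ) ≤ 1 / (q : ℝ))]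
  calc _ ≤ 1 / (q : ℝ) * ((s : ℝ) * (M / n)) :=
        mul_le_mul_of_nonneg_left key (by positivity)
    _ = _ := by ring
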